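/- The positive Munchausen numbers in base 10 are exactly 1 and 3435; that is, for n ≥ 1, n = P_10(n) if and only if n = 1 or n = 3435. -/

import Mathlib

/-!
A number with `L` digits in base `b` is at least `b ^ (L - 1)`, while its digit power sum is at most
`L * (b - 1) ^ (b - 1)`; hence a Munchausen number in base `b` has at most `b` digits. Since the
digit power sum depends only on the multiset of digits, it then suffices, in base 10, to inspect
the sums `n = ∑ c ^ c` over the multisets of at most ten decimal digits. Casting out nines discards
most of them: if `n` has these digits, then `∑ c ^ c ≡ ∑ c [MOD 9]`.
-/

/-- Digit power sum: `P b n = Σ cᵢ^cᵢ` over the base-`b` digits of `n`, with `0^0 = 1`. -/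
def P (b n : ℕ) : ℕ := ((Nat.digits b n).map (fun c => c ^ c)).sum

section DigitBound

theorem P_le_length_digits_mul {b : ℕ} (hb : 1 < b) (n : ℕ) :
    P b n ≤ (Nat.digits b n).length * (b - 1) ^ (b - 1) := by
  have digit_pow_le : ∀ x ∈ (Nat.digits b n).map (fun c => c ^ c), x ≤ (b - 1) ^ (b - 1) := by
    simp only [List.mem_map, forall_exists_index, and_imp, forall_apply_eq_imp_iff₂]
    intro c hc
    have hcb : c ≤ b - 1 := Nat.le_sub_one_of_lt (Nat.digits_lt_base hb hc)
    exact Nat.pow_self_mono hcb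
  simpa [P] using List.sum_le_card_nsmul _ _ digit_pow_le

theorem add_two_mul_pow_self_lt {m : ℕ} (hm : m ≠ 0) : (m + 2) * m ^ m < (m + 1) ^ (m + 1) := by
  obtain ⟨k, rfl⟩ := Nat.exists_eq_succ_of_ne_zero hm
  calc (k + 1 + 2) * (k + 1) ^ (k + 1) = ((k + 1) * (k + 3)) * (k + 1) ^ k := by ring
    _ < (k + 2) ^ 2 * (k + 1) ^ k := by gcongr; linarith
    _ ≤ (k + 2) ^ 2 * (k + 2) ^ k := by gcongr; omega
    _ = (k + 1 + 1) ^ (k + 1 + 1) := by ring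

theorem succ_mul_pow_self_lt {m k : ℕ} (hm : m ≠ 0) (hk : m + 1 ≤ k) :
    (k + 1) * m ^ m < (m + 1) ^ k := by
  induction k, hk using Nat.le_induction with
  | base => exact add_two_mul_pow_self_lt hm
  | succ k _ ih =>
    calc (k + 1 + 1) * m ^ m ≤ 2 * ((k + 1) * m ^ m) := by rw [← mul_assoc]; gcongr; omega
      _ < 2 * (m + 1) ^ k := by gcongr
      _ ≤ (m + 1) * (m + 1) ^ k := by gcongr; omega
      _ = (m + 1) ^ (k + 1) := (pow_succ' _ _).symm

theorem length_digits_le_of_eq_P {b n : ℕ} (hb : 1 < b) (h : n = P b n) :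
    (Nat.digits b n).length ≤ b := by
  by_contra! hlt
  obtain ⟨m, rfl⟩ := Nat.exists_eq_add_of_lt hb
  obtain ⟨k, hk⟩ := Nat.exists_eq_add_of_lt (Nat.zero_lt_of_lt hlt)
  rw [zero_add] at hk
  have lower : (1 + m + 1) ^ k ≤ n := (Nat.lt_digits_length_iff hb n).1 (by omega)
  have upper : n ≤ (k + 1) * (1 + m) ^ (1 + m) := by
    simpa [hk, ← h] using P_le_length_digits_mul hb n
  exact (succ_mul_pow_self_lt (by omega) (by omega)).not_ge (lower.trans upper)

end DigitBound

section Search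

variable {α M : Type*}

/-- The test that `next (k - j) (a + j • w)` holds for all `j ≤ k`: an element of weight `w` is
chosen `j` times, leaving `k - j` further choices. The recursor is used directly because it reduces
faster in the kernel than a definition by pattern matching. -/
def forallMultiplicities [Add M] (next : ℕ → M → Bool) (w : M) (k : ℕ) : M → Bool :=
  k.rec (next 0) fun k ih a => next (k + 1) a && ih (a + w)

/-- The test that `p (k - m.card) (a + (m.map f).sum)` holds for all multisets `m` of at most `k`
elements of the list. -/
def forallMultisets [Add M] (f : α → M) (p : ℕ → M → Bool) : List α → ℕ → M → Bool
  | [] => p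
  | c :: cs => forallMultiplicities (forallMultisets f p cs) (f c)

theorem apply_of_forallMultiplicities [AddMonoid M] {next : ℕ → M → Bool} {w a : M} {j k : ℕ}
    (h : forallMultiplicities next w k a) (hj : j ≤ k) : next (k - j) (a + j • w) := by
  induction k generalizing a j with
  | zero => simpa [Nat.le_zero.1 hj, forallMultiplicities] using h
  | succ k ih =>
    obtain ⟨test_none, test_some⟩ := Bool.and_eq_true_iff.1 h
    cases j with
    | zero => simpa using test_none
    | succ j => simpa [succ_nsmul', add_assoc] using ih test_some (Nat.le_of_succ_le_succ hj)

theorem replicate_count_add_filter_ne [DecidableEq α] (c : α) (m : Multiset α) :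
    Multiset.replicate (m.count c) c + m.filter (· ≠ c) = m := by
  rw [← Multiset.filter_eq', Multiset.filter_add_not]

theorem apply_of_forallMultisets [AddCommMonoid M] {f : α → M} {p : ℕ → M → Bool}
    {l : List α} {k : ℕ} {a : M} (h : forallMultisets f p l k a) {m : Multiset α}
    (hm : ∀ c ∈ m, c ∈ l) (hk : m.card ≤ k) : p (k - m.card) (a + (m.map f).sum) := by
  classical
  induction l generalizing k a m with
  | nil =>
    obtain rfl : m = 0 := Multiset.eq_zero_of_forall_notMem fun c hc => by simpa using hm c hc
    simpa [forallMultisets] using h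
  | cons c cs ih =>
    rw [← replicate_count_add_filter_ne c m] at hk ⊢
    simp only [Multiset.card_add, Multiset.card_replicate, Multiset.map_add, Multiset.sum_add,
      Multiset.map_replicate, Multiset.sum_replicate, ← add_assoc, ← Nat.sub_sub] at hk ⊢
    refine ih (apply_of_forallMultiplicities h (by omega)) (fun d hd => ?_) (by omega)
    obtain ⟨hdm, hdc⟩ := Multiset.mem_filter.1 hd
    exact List.mem_of_ne_of_mem hdc (hm d hdm)

end Search

/-- The contribution of a digit to the digit power sum and to the digit sum. -/
def digitWeight (c : ℕ) : ℕ × ℕ := (c ^ c, c)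

/-- The test that a positive number `n` is `1`, or `3435`, or does not have `10 - k` digits, or is
not a Munchausen number in base 10. Checking the number of digits is cheap and spares most
evaluations of `P`; `Nat.blt`, `Nat.ble` and `Nat.beq` are evaluated by the kernel faster than the
`Decidable` instances. -/
def munchausenTest (k n : ℕ) : Bool :=
  n.blt (10 ^ (9 - k)) || (10 ^ (10 - k)).ble n || !(P 10 n).beq n || n == 1 || n == 3435

theorem munchausenTest_iff {k n : ℕ} : munchausenTest k n ↔
    (10 ^ (9 - k) ≤ n → n < 10 ^ (10 - k) → n = P 10 n → n = 1 ∨ n = 3435) := by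
  simp only [munchausenTest, Bool.or_eq_true, Bool.not_eq_true', ← Bool.not_eq_true, Nat.blt_eq,
    Nat.ble_eq, Nat.beq_eq, beq_iff_eq]
  grind

/-- The test applied to the power sum and the digit sum of a multiset of `10 - k` digits other
than `1`: if they agree mod 9, then all ways of adding at most `k` digits `1` pass
`munchausenTest`. Digits `1` are added last because they preserve the congruence. -/
def castOutNinesTest (k : ℕ) (x : ℕ × ℕ) : Bool :=
  !(x.1 % 9).beq (x.2 % 9) || forallMultiplicities munchausenTest 1 k x.1

theorem forallMultisets_castOutNinesTest :
    forallMultisets digitWeight castOutNinesTest [9, 8, 7, 6, 5, 4, 3, 2, 0] 10 (0, 0) := by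
  decide +kernel

theorem sum_map_digitWeight (m : Multiset ℕ) :
    (m.map digitWeight).sum = ((m.map fun c => c ^ c).sum, m.sum) := by
  induction m using Multiset.induction_on with
  | empty => rfl
  | cons c m ih => simp [ih, digitWeight]

theorem munchausenTest_sum_pow_self {m : Multiset ℕ} (digit_lt : ∀ c ∈ m, c < 10)
    (card_le : m.card ≤ 10) (modEq : (m.map fun c => c ^ c).sum ≡ m.sum [MOD 9]) :
    munchausenTest (10 - m.card) (m.map fun c => c ^ c).sum := by
  obtain ⟨j, others, one_notMem, rfl⟩ : ∃ j others, 1 ∉ others ∧ m = .replicate j 1 + others :=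
    ⟨_, _, by simp, (replicate_count_add_filter_ne 1 m).symm⟩
  simp only [Multiset.card_add, Multiset.card_replicate, Multiset.map_add, Multiset.map_replicate,
    Multiset.sum_add, Multiset.sum_replicate, one_pow] at card_le modEq ⊢
  have mem_digits : ∀ c ∈ others, c ∈ [9, 8, 7, 6, 5, 4, 3, 2, 0] := fun c hc => by
    have : c < 10 := digit_lt c (Multiset.mem_add.2 (.inr hc))
    have : c ≠ 1 := ne_of_mem_of_not_mem hc one_notMem
    interval_cases c <;> simp_all
  have test_others :=
    apply_of_forallMultisets forallMultisets_castOutNinesTest mem_digits (by omega)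
  have modEq_others : ((others.map fun c => c ^ c).sum % 9).beq (others.sum % 9) :=
    (Nat.beq_eq ..).mpr (modEq.add_left_cancel' _)
  rw [sum_map_digitWeight, Prod.mk_zero_zero, zero_add, castOutNinesTest, modEq_others]
    at test_others
  simpa [Nat.sub_sub, add_comm] using
    apply_of_forallMultiplicities (j := j) test_others (by omega)

theorem munchausenTest_of_eq_P {n : ℕ} (h : n = P 10 n) :
    munchausenTest (10 - (Nat.digits 10 n).length) n := by
  have P_eq : ((Nat.digits 10 n : Multiset ℕ).map fun c => c ^ c).sum = n := by
    simpa [P] using h.symm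
  have test := munchausenTest_sum_pow_self (m := Nat.digits 10 n)
    (fun c hc => Nat.digits_lt_base (by norm_num) hc)
    (length_digits_le_of_eq_P (by norm_num) h)
    (by simpa only [P_eq, Multiset.sum_coe] using Nat.modEq_nine_digits_sum n)
  rwa [P_eq] at test

theorem eq_or_eq_of_eq_P {n : ℕ} (hn : n ≠ 0) (h : n = P 10 n) : n = 1 ∨ n = 3435 := by
  have length_le := length_digits_le_of_eq_P (by norm_num) h
  have length_pos := List.length_pos_of_ne_nil (Nat.digits_ne_nil_iff_ne_zero (b := 10).2 hn)
  have lower : 10 ^ (9 - (10 - (Nat.digits 10 n).length)) ≤ n :=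
    (Nat.lt_digits_length_iff (by norm_num) n).1 (by omega)
  have upper : n < 10 ^ (10 - (10 - (Nat.digits 10 n).length)) :=
    (Nat.digits_length_le_iff (by norm_num) n).1 (by omega)
  exact munchausenTest_iff.1 (munchausenTest_of_eq_P h) lower upper h

theorem munchausen_base10 (n : ℕ) (hn : 1 ≤ n) :
    n = P 10 n ↔ n = 1 ∨ n = 3435 := by
  constructor
  · exact eq_or_eq_of_eq_P (Nat.one_le_iff_ne_zero.1 hn)
  · rintro (rfl | rfl) <;> simp [P]
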